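/- Let B ⊆ {1, …, d} be a subset with |B| = n + 1 such that the degree-1 forms {ℓᵢ : i ∈ B} are linearly independent. Then for every nonzero v ∈ K^{n+1}, the product ∏_{i ∉ B} ℓᵢ lies in I_v^{nl_v}. (This is the key estimate showing that each term of Warren's triangulation formula for the adjoint vanishes at every point at least to the order given by the nullity of the flat of hyperplanes through that point.) -/

import Mathlib

open MvPolynomial Finset Classical

noncomputable section

/-- The flat `F_v = {i | ℓᵢ(v) = 0}` of all hyperplanes through `v`. -/
def flatOf {K : Type*} [Field K] {n d : ℕ} (ℓ : Fin d → MvPolynomial (Fin (n + 1)) K)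
    (v : Fin (n + 1) → K) : Finset (Fin d) :=
  Finset.univ.filter fun i => eval v (ℓ i) = 0

/-- The rank `r_v`: the dimension of the linear span of `{ℓᵢ : i ∈ F_v}`. -/
def rkOf {K : Type*} [Field K] {n d : ℕ} (ℓ : Fin d → MvPolynomial (Fin (n + 1)) K)
    (v : Fin (n + 1) → K) : ℕ :=
  Module.finrank K (Submodule.span K (ℓ '' (flatOf ℓ v : Set (Fin d))))

/-- The nullity `nl_v = |F_v| − r_v` of the flat `F_v`. -/
def nlOf {K : Type*} [Field K] {n d : ℕ} (ℓ : Fin d → MvPolynomial (Fin (n + 1)) K)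
    (v : Fin (n + 1) → K) : ℕ :=
  (flatOf ℓ v).card - rkOf ℓ v

/-- The ideal `I_v` generated by all homogeneous degree-1 polynomials vanishing at `v`. -/
def pointIdeal {K : Type*} [Field K] {n : ℕ} (v : Fin (n + 1) → K) :
    Ideal (MvPolynomial (Fin (n + 1)) K) :=
  Ideal.span {p | p.IsHomogeneous 1 ∧ eval v p = 0}

/-- Let `B ⊆ {1, …, d}` with `|B| = n + 1` be such that `{ℓᵢ : i ∈ B}` is
linearly independent. Then for every nonzero `v ∈ K^{n+1}` the product `∏_{i ∉ B} ℓᵢ` lies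
in `I_v^{nl_v}`. -/
theorem simplex_term_vanishing {K : Type*} [Field K] {n d : ℕ}
    (ℓ : Fin d → MvPolynomial (Fin (n + 1)) K)
    (hhom : ∀ i, (ℓ i).IsHomogeneous 1)
    (B : Finset (Fin d)) (hB : B.card = n + 1)
    (hindep : LinearIndependent K (fun i : B => ℓ i))
    (v : Fin (n + 1) → K) (hv : v ≠ 0) :
    (∏ i ∈ Bᶜ, ℓ i) ∈ pointIdeal v ^ nlOf ℓ v := by
  have hcard : (flatOf ℓ v ∩ B).card ≤ rkOf ℓ v := by
    have hli : LinearIndependent K (fun i : (flatOf ℓ v ∩ B : Finset (Fin d)) => ℓ i) :=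
      hindep.comp (fun i : (flatOf ℓ v ∩ B : Finset (Fin d)) =>
        (⟨i.1, (Finset.mem_inter.mp i.2).2⟩ : B))
        (fun a b h => Subtype.ext (congrArg (fun x : B => x.1) h))
    have h1 := finrank_span_eq_card hli
    rw [Fintype.card_coe] at h1
    rw [← h1]
    unfold rkOf
    haveI : Module.Finite K (Submodule.span K (ℓ '' (flatOf ℓ v : Set (Fin d)))) :=
      FiniteDimensional.span_of_finite K (Set.toFinite _)
    apply Submodule.finrank_mono
    apply Submodule.span_mono
    rintro _ ⟨i, rfl⟩
    exact ⟨i.1, (Finset.mem_inter.mp i.2).1, rfl⟩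
  have hle : nlOf ℓ v ≤ (flatOf ℓ v \ B).card := by
    have := Finset.card_sdiff_add_card_inter (flatOf ℓ v) B
    unfold nlOf
    omega
  have hsub : flatOf ℓ v \ B ⊆ Bᶜ := fun i hi => by
    simpa using (Finset.mem_sdiff.mp hi).2
  rw [← Finset.prod_sdiff hsub]
  apply Ideal.mul_mem_left
  apply Ideal.pow_le_pow_right hle
  rw [← Finset.prod_const]
  apply Ideal.prod_mem_prod
  intro i hi
  apply Ideal.subset_span
  refine ⟨hhom i, ?_⟩
  have := (Finset.mem_sdiff.mp hi).1
  simpa [flatOf] using this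
end
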